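/- Let X be a word with prefix state p and with d_X dominant loop blocks in its prefix decomposition, and let Y be a word with suffix state s and d_Y dominant loop blocks in its suffix decomposition. Suppose that p and s are compatible, that d_X + d_Y = D + 1, that L_p = coL_s, and that the state p (and therefore also s) is dominant. Then the two states p and s match. -/

import Mathlib

open Filter Asymptotics
open scoped Classical

/-- An embedding order on words over a weighted alphabet. -/
structure EmbeddingOrder (A : Type*) (w : A → ℕ) where
  le : List A → List A → Prop
  le_refl : ∀ W, le W W
  le_trans : ∀ {U V W}, le U V → le V W → le U W
  le_antisymm : ∀ {V W}, le V W → le W V → V = W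
  nil_le : ∀ W, le [] W
  weight_lt : ∀ {W V}, le W V → W ≠ V → (W.map w).sum < (V.map w).sum
  le_iff_factor : ∀ W V, le W V ↔ ∃ Ws : List (List A),
    Ws.length = V.length ∧ Ws.flatten = W ∧ ∀ q ∈ Ws.zip V, le q.1 [q.2]

namespace EmbeddingOrder

variable {A : Type*} {w : A → ℕ} (E : EmbeddingOrder A w) {f : ℕ} (φ : Fin f → List A)

/-- The weight of a word: the sum of the weights of its letters. -/
def wt (w : A → ℕ) (W : List A) : ℕ := (W.map w).sum

/-- The class `C = A* ∩ Av(φ¹,…,φ^f)` of all words avoiding every forbidden word. -/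
def Cset : Set (List A) := {W | ∀ i, ¬ E.le (φ i) W}

/-- The prefix state of `W`: its `i`-th component is the length of the longest prefix
of the forbidden word `φ i` contained in `W`. -/
noncomputable def pstate (W : List A) : Fin f → ℕ := fun i =>
  sSup {p | p ≤ (φ i).length ∧ E.le ((φ i).take p) W}

/-- The suffix state of `W`: its `i`-th component is the length of the longest suffix
of the forbidden word `φ i` contained in `W`. -/
noncomputable def sstate (W : List A) : Fin f → ℕ := fun i =>
  sSup {p | p ≤ (φ i).length ∧ E.le ((φ i).drop ((φ i).length - p)) W}

/-- A prefix state `p` and a suffix state `s` *overlap* if `p i + s i ≥ ℓ_i` for some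
`i` (equivalently, `XY ∉ C` whenever `X` has prefix state `p` and `Y` suffix state `s`);
otherwise they are *compatible*. -/
def POverlap (p s : Fin f → ℕ) : Prop := ∃ i, (φ i).length ≤ p i + s i

/-- The (prefix) loop alphabet of a state `p`: the letters whose appending does not
change the prefix state `p`. -/
def stateLoopP (p : Fin f → ℕ) : Set A :=
  {a | ∀ X : List A, E.pstate φ X = p → E.pstate φ (X ++ [a]) = p}

/-- The suffix loop alphabet of a state `s`: the letters whose prepending does not
change the suffix state `s`. -/
def stateLoopS (s : Fin f → ℕ) : Set A :=
  {a | ∀ Y : List A, E.sstate φ Y = s → E.sstate φ (a :: Y) = s}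

/-- `p'` is a *prefix successor* of `p`: `p' ≠ p` and some letter is a transition
symbol from `p` to `p'`. -/
def PSucc (p p' : Fin f → ℕ) : Prop :=
  p ≠ p' ∧ ∃ b : A, ∀ X : List A, E.pstate φ X = p → E.pstate φ (X ++ [b]) = p'

/-- `s'` is a *suffix successor* of `s`. -/
def SSucc (s s' : Fin f → ℕ) : Prop :=
  s ≠ s' ∧ ∃ b : A, ∀ Y : List A, E.sstate φ Y = s → E.sstate φ (b :: Y) = s'

/-- Compatible states `p` (prefix) and `s` (suffix) *match* if every prefix successor
of `p` overlaps with `s` and every suffix successor of `s` overlaps with `p`. -/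
def Matches (p s : Fin f → ℕ) : Prop :=
  ¬ POverlap φ p s ∧ (∀ p', E.PSucc φ p p' → POverlap φ p' s) ∧
    ∀ s', E.SSucc φ s s' → POverlap φ p s'

/-- `ρ(S)`: the unique positive root of `1 − Σ_{a∈S} x^{weight a}` for a nonempty set
`S` of letters (realised as a supremum). -/
noncomputable def rhoOf (w : A → ℕ) (S : Set A) : ℝ :=
  sSup {x : ℝ | 0 ≤ x ∧ ∑' a : S, x ^ w (a : A) ≤ 1}

/-- The growth rate of `S*`: the reciprocal `ρ(S)⁻¹` of the positive root of
`1 − Σ_{a∈S} x^{weight a}`. -/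
noncomputable def growthOf (w : A → ℕ) (S : Set A) : ℝ := (rhoOf w S)⁻¹

/-- The dominant growth rate `γ` of the class: the largest growth rate of the loop
alphabet of a (reachable) prefix state. -/
noncomputable def gammaC : ℝ :=
  sSup {g : ℝ | ∃ X ∈ E.Cset φ, g = growthOf w (E.stateLoopP φ (E.pstate φ X))}

/-- The number of dominant loop blocks (equivalently, dominant states) in the prefix
decomposition of `W`. -/
noncomputable def domCountP (W : List A) : ℕ :=
  Set.ncard {p : Fin f → ℕ | (∃ j ≤ W.length, E.pstate φ (W.take j) = p) ∧
    growthOf w (E.stateLoopP φ p) = E.gammaC φ}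

/-- The number of dominant loop blocks (equivalently, dominant states) in the suffix
decomposition of `W`. -/
noncomputable def domCountS (W : List A) : ℕ :=
  Set.ncard {s : Fin f → ℕ | (∃ j ≤ W.length, E.sstate φ (W.drop j) = s) ∧
    growthOf w (E.stateLoopS φ s) = E.gammaC φ}

/-- `D`: the largest number of dominant states appearing on a single prefix transition
path of a word of the class. -/
noncomputable def Dmax : ℕ := sSup {d : ℕ | ∃ W ∈ E.Cset φ, E.domCountP φ W = d}

end EmbeddingOrder

open EmbeddingOrder

/-!
Let `X` have prefix state `p`, let `Y` have suffix state `s`, and let `b` be a letter outside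
`L_p = coL_s`. If `X b Y` were in the class, every position of `Y` could be *saturated*: insert
loop symbols of the current suffix state until all of them have become loop symbols of the current
prefix state as well. The word stays in the class, and wherever the suffix state is dominant so is
the prefix state, with the same loop alphabet, because growth rates increase strictly with the
alphabet. If the prefix states at two such positions agree, then every letter of `Y` in between is
a loop symbol, so the suffix states agree too. The saturated word therefore has `d_Y` dominant
prefix states after `b` and `d_X` before it, contradicting `d_X + d_Y = D + 1`.
-/

namespace EmbeddingOrder

/-! ### Growth rates -/

section Growth

variable {A : Type*} {w : A → ℕ}

/-- The generating function `x ↦ ∑_{a ∈ S} x ^ weight a` of a set of letters, whose value `1`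
determines `rhoOf w S`. -/
noncomputable def letterGenFun (w : A → ℕ) (S : Set A) (x : ℝ) : ℝ := ∑' a : S, x ^ w (a : A)

theorem letterGenFun_zero (hw : ∀ a, 0 < w a) (S : Set A) : letterGenFun w S 0 = 0 := by
  simp [letterGenFun, zero_pow, (hw _).ne']

/-- The defining supremum is unbounded, so this is the junk value of `sSup`; it gives the empty
alphabet growth rate `0`. -/
theorem rhoOf_empty : rhoOf w (∅ : Set A) = 0 := by
  refine Real.sSup_of_not_bddAbove fun ⟨M, hM⟩ => ?_
  have : |M| + 1 ≤ M := hM ⟨by positivity, by simp⟩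
  linarith [le_abs_self M]

variable [Finite A]

theorem continuous_letterGenFun (S : Set A) : Continuous (letterGenFun w S) := by
  have := Fintype.ofFinite S
  unfold letterGenFun
  simp only [tsum_fintype]
  fun_prop

theorem letterGenFun_lt_of_ssubset {S T : Set A} (h : S ⊂ T) {x : ℝ} (hx : 0 < x) :
    letterGenFun w S x < letterGenFun w T x := by
  have := Fintype.ofFinite A
  obtain ⟨c, hcT, hcS⟩ := Set.exists_of_ssubset h
  simp only [letterGenFun, tsum_subtype _ fun a => x ^ w a, tsum_fintype]
  refine Finset.sum_lt_sum (fun a _ => ?_) ⟨c, Finset.mem_univ c, ?_⟩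
  · exact Set.indicator_le_indicator_of_subset h.subset (fun a => (pow_pos hx (w a)).le) a
  · simp [hcT, hcS, pow_pos hx]

theorem pow_le_letterGenFun {S : Set A} {a : A} (ha : a ∈ S) {x : ℝ} (hx : 0 ≤ x) :
    x ^ w a ≤ letterGenFun w S x :=
  (Summable.of_finite (f := fun b : S => x ^ w (b : A))).le_tsum ⟨a, ha⟩ fun _ _ => pow_nonneg hx _

theorem bddAbove_letterGenFun_le_one (hw : ∀ a, 0 < w a) {S : Set A} (hS : S.Nonempty) :
    BddAbove {x : ℝ | 0 ≤ x ∧ letterGenFun w S x ≤ 1} := by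
  obtain ⟨a, ha⟩ := hS
  exact ⟨1, fun x ⟨hx, hx1⟩ =>
    (pow_le_one_iff_of_nonneg hx (hw a).ne').1 ((pow_le_letterGenFun ha hx).trans hx1)⟩

theorem lt_rhoOf (hw : ∀ a, 0 < w a) {S : Set A} (hS : S.Nonempty) {r : ℝ} (hr : 0 ≤ r)
    (h : letterGenFun w S r < 1) : r < rhoOf w S := by
  have hnear : ∀ᶠ x in nhdsWithin r (Set.Ioi r), letterGenFun w S x < 1 :=
    ((continuous_letterGenFun S).continuousAt.eventually_lt continuousAt_const h).filter_mono
      nhdsWithin_le_nhds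
  obtain ⟨y, hy, hry : r < y⟩ := (hnear.and self_mem_nhdsWithin).exists
  exact hry.trans_le (le_csSup (bddAbove_letterGenFun_le_one hw hS) ⟨hr.trans hry.le, hy.le⟩)

theorem letterGenFun_rhoOf_le_one (hw : ∀ a, 0 < w a) {S : Set A} (hS : S.Nonempty) :
    letterGenFun w S (rhoOf w S) ≤ 1 := by
  have hclosed : IsClosed {x : ℝ | 0 ≤ x ∧ letterGenFun w S x ≤ 1} :=
    isClosed_Ici.inter (isClosed_le (continuous_letterGenFun S) continuous_const)
  exact (hclosed.csSup_mem ⟨0, le_rfl, by simp [letterGenFun_zero hw]⟩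
    (bddAbove_letterGenFun_le_one hw hS)).2

theorem growthOf_strictMono (hw : ∀ a, 0 < w a) : StrictMono (growthOf w) := by
  intro S T h
  have hT : T.Nonempty := Set.nonempty_of_ssubset' h
  have hρT : 0 < rhoOf w T := lt_rhoOf hw hT le_rfl (by simp [letterGenFun_zero hw])
  obtain rfl | hS := S.eq_empty_or_nonempty
  · simpa [growthOf, rhoOf_empty] using hρT
  · exact inv_strictAnti₀ hρT (lt_rhoOf hw hS hρT.le
      ((letterGenFun_lt_of_ssubset h hρT).trans_le (letterGenFun_rhoOf_le_one hw hT)))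

end Growth

variable {A : Type*} {w : A → ℕ} (E : EmbeddingOrder A w)

theorem weight_pos (E : EmbeddingOrder A w) (a : A) : 0 < w a := by
  simpa using E.weight_lt (E.nil_le [a]) (List.cons_ne_nil a []).symm

/-! ### Embeddings into concatenations -/

theorem append_le_append {W₁ W₂ V₁ V₂ : List A} (h₁ : E.le W₁ V₁) (h₂ : E.le W₂ V₂) :
    E.le (W₁ ++ W₂) (V₁ ++ V₂) := by
  obtain ⟨Ws₁, hlen₁, rfl, hle₁⟩ := (E.le_iff_factor _ _).1 h₁
  obtain ⟨Ws₂, hlen₂, rfl, hle₂⟩ := (E.le_iff_factor _ _).1 h₂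
  refine (E.le_iff_factor _ _).2 ⟨Ws₁ ++ Ws₂, by simp [hlen₁, hlen₂], by simp, fun q hq => ?_⟩
  rw [List.zip_append hlen₁] at hq
  exact (List.mem_append.1 hq).elim (hle₁ q) (hle₂ q)

theorem exists_append_of_le_append {W V₁ V₂ : List A} (h : E.le W (V₁ ++ V₂)) :
    ∃ W₁ W₂, W₁ ++ W₂ = W ∧ E.le W₁ V₁ ∧ E.le W₂ V₂ := by
  obtain ⟨Ws, hlen, rfl, hle⟩ := (E.le_iff_factor _ _).1 h
  obtain ⟨Ws₁, Ws₂, rfl, hlen₁⟩ : ∃ Ws₁ Ws₂, Ws₁ ++ Ws₂ = Ws ∧ Ws₁.length = V₁.length :=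
    ⟨Ws.take V₁.length, Ws.drop V₁.length, List.take_append_drop _ _, by simp [hlen]⟩
  have hlen₂ : Ws₂.length = V₂.length := by simpa [hlen₁] using hlen
  rw [List.zip_append hlen₁] at hle
  exact ⟨Ws₁.flatten, Ws₂.flatten, List.flatten_append.symm,
    (E.le_iff_factor _ _).2 ⟨Ws₁, hlen₁, rfl, fun q hq => hle q (List.mem_append_left _ hq)⟩,
    (E.le_iff_factor _ _).2 ⟨Ws₂, hlen₂, rfl, fun q hq => hle q (List.mem_append_right _ hq)⟩⟩

theorem le_append_iff_exists_take_drop (W V₁ V₂ : List A) :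
    E.le W (V₁ ++ V₂) ↔ ∃ m, E.le (W.take m) V₁ ∧ E.le (W.drop m) V₂ := by
  constructor
  · intro h
    obtain ⟨W₁, W₂, rfl, h₁, h₂⟩ := E.exists_append_of_le_append h
    exact ⟨W₁.length, by simpa using h₁, by simpa using h₂⟩
  · rintro ⟨m, h₁, h₂⟩
    simpa using E.append_le_append h₁ h₂

theorem le_of_isInfix {U V : List A} (h : U <:+: V) : E.le U V := by
  obtain ⟨S, T, rfl⟩ := h
  simpa using E.append_le_append (E.append_le_append (E.nil_le S) (E.le_refl U)) (E.nil_le T)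

variable {f : ℕ} (φ : Fin f → List A)

/-! ### Prefix and suffix states -/

theorem pstate_le_length (W : List A) (i : Fin f) : E.pstate φ W i ≤ (φ i).length :=
  csSup_le' fun _ h => h.1

theorem take_le_iff {W : List A} {i : Fin f} {k : ℕ} (hk : k ≤ (φ i).length) :
    E.le ((φ i).take k) W ↔ k ≤ E.pstate φ W i := by
  have hbdd : BddAbove {p | p ≤ (φ i).length ∧ E.le ((φ i).take p) W} := ⟨_, fun _ h => h.1⟩
  refine ⟨fun h => le_csSup hbdd ⟨hk, h⟩, fun h => ?_⟩
  have hmax := (Nat.sSup_mem ⟨0, by simp [E.nil_le W]⟩ hbdd).2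
  exact E.le_trans (E.le_of_isInfix (List.take_prefix_take_left h).isInfix) hmax

theorem drop_le_iff {W : List A} {i : Fin f} {k : ℕ} :
    E.le ((φ i).drop k) W ↔ (φ i).length - k ≤ E.sstate φ W i := by
  have hbdd : BddAbove {p | p ≤ (φ i).length ∧ E.le ((φ i).drop ((φ i).length - p)) W} :=
    ⟨_, fun _ h => h.1⟩
  refine ⟨fun h => ?_, fun h => ?_⟩
  · obtain hk | hk := le_total k (φ i).length
    · exact le_csSup hbdd ⟨Nat.sub_le _ _, by rwa [Nat.sub_sub_self hk]⟩
    · simp [Nat.sub_eq_zero_of_le hk]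
  · have hmax := (Nat.sSup_mem ⟨0, by simp [E.nil_le W]⟩ hbdd).2
    exact E.le_trans (E.le_of_isInfix
      (List.drop_suffix_drop_left _ (tsub_le_iff_tsub_le.1 h)).isInfix) hmax

theorem pstate_mono {V W : List A} (h : E.le V W) : E.pstate φ V ≤ E.pstate φ W := fun i =>
  (E.take_le_iff φ (E.pstate_le_length φ V i)).1
    (E.le_trans ((E.take_le_iff φ (E.pstate_le_length φ V i)).2 le_rfl) h)

theorem pstate_mono_of_isPrefix {V W : List A} (h : V <+: W) : E.pstate φ V ≤ E.pstate φ W :=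
  E.pstate_mono φ (E.le_of_isInfix h.isInfix)

theorem pstate_eq_iff {V W : List A} : E.pstate φ V = E.pstate φ W ↔
    ∀ i k, E.le ((φ i).take k) V ↔ E.le ((φ i).take k) W := by
  refine ⟨fun h i k => ?_, fun h => funext fun i => ?_⟩
  · rw [List.take_eq_take_min, E.take_le_iff φ (min_le_right _ _),
      E.take_le_iff φ (min_le_right _ _), h]
  · refine eq_of_forall_le_iff fun k => ?_
    obtain hk | hk := le_or_gt k (φ i).length
    · rw [← E.take_le_iff φ hk, ← E.take_le_iff φ hk, h]
    · simp only [((E.pstate_le_length φ _ i).trans_lt hk).not_ge]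

theorem sstate_eq_iff {V W : List A} : E.sstate φ V = E.sstate φ W ↔
    ∀ i k, E.le ((φ i).drop k) V ↔ E.le ((φ i).drop k) W := by
  refine ⟨fun h i k => by rw [E.drop_le_iff, E.drop_le_iff, h], fun h => funext fun i => ?_⟩
  simp only [sstate, h]

theorem pstate_append_congr {W W' : List A} (h : E.pstate φ W = E.pstate φ W') (U : List A) :
    E.pstate φ (W ++ U) = E.pstate φ (W' ++ U) := by
  rw [pstate_eq_iff] at h ⊢
  simp only [le_append_iff_exists_take_drop, List.take_take, h, implies_true]

theorem sstate_append_congr {W W' : List A} (h : E.sstate φ W = E.sstate φ W') (U : List A) :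
    E.sstate φ (U ++ W) = E.sstate φ (U ++ W') := by
  rw [sstate_eq_iff] at h ⊢
  simp only [le_append_iff_exists_take_drop, List.drop_drop, h, implies_true]

theorem append_mem_Cset_iff {W V : List A} :
    W ++ V ∈ E.Cset φ ↔ ¬ POverlap φ (E.pstate φ W) (E.sstate φ V) := by
  simp only [Cset, POverlap, Set.mem_ofPred_eq, not_exists]
  refine forall_congr' fun i => not_congr ?_
  rw [le_append_iff_exists_take_drop]
  constructor
  · rintro ⟨m, htake, hdrop⟩
    rw [List.take_eq_take_min, E.take_le_iff φ (min_le_right _ _)] at htake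
    rw [E.drop_le_iff] at hdrop
    omega
  · intro h
    exact ⟨_, (E.take_le_iff φ (E.pstate_le_length φ W i)).2 le_rfl,
      (E.drop_le_iff φ).2 (Nat.sub_le_iff_le_add'.2 h)⟩

theorem mem_Cset_of_le {V W : List A} (h : E.le V W) (hW : W ∈ E.Cset φ) : V ∈ E.Cset φ :=
  fun i hi => hW i (E.le_trans hi h)

/-! ### Loop alphabets -/

theorem mem_stateLoopP_pstate {W : List A} {a : A} :
    a ∈ E.stateLoopP φ (E.pstate φ W) ↔ E.pstate φ (W ++ [a]) = E.pstate φ W :=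
  ⟨fun h => h W rfl, fun h _ hV => (E.pstate_append_congr φ hV [a]).trans h⟩

theorem mem_stateLoopS_sstate {W : List A} {a : A} :
    a ∈ E.stateLoopS φ (E.sstate φ W) ↔ E.sstate φ (a :: W) = E.sstate φ W :=
  ⟨fun h => h W rfl, fun h _ hV => (E.sstate_append_congr φ hV [a]).trans h⟩

theorem sstate_append_of_forall_mem {Y v : List A}
    (hv : ∀ a ∈ v, a ∈ E.stateLoopS φ (E.sstate φ Y)) : E.sstate φ (v ++ Y) = E.sstate φ Y := by
  induction v with
  | nil => rfl
  | cons a v ih =>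
    rw [List.forall_mem_cons] at hv
    exact hv.1 (v ++ Y) (ih hv.2)

theorem finite_range_pstate : (Set.range (E.pstate φ)).Finite :=
  (Set.finite_Iic fun i => (φ i).length).subset <|
    Set.range_subset_iff.2 fun W i => E.pstate_le_length φ W i

/-- Any word over `L` after which the prefix state is maximal will do. -/
theorem exists_subset_stateLoopP_append (L : Set A) (U : List A) :
    ∃ v : List A, (∀ a ∈ v, a ∈ L) ∧ L ⊆ E.stateLoopP φ (E.pstate φ (U ++ v)) := by
  have hfin : ((fun v => E.pstate φ (U ++ v)) '' {v | ∀ a ∈ v, a ∈ L}).Finite :=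
    (E.finite_range_pstate φ).subset (Set.image_subset_iff.2 fun v _ => ⟨U ++ v, rfl⟩)
  obtain ⟨_, ⟨v, hv, rfl⟩, hmax⟩ := hfin.exists_maximal ⟨_, [], by simp, rfl⟩
  refine ⟨v, hv, fun a ha => (E.mem_stateLoopP_pstate φ).2 ?_⟩
  have hle : E.pstate φ (U ++ v) ≤ E.pstate φ (U ++ v ++ [a]) :=
    E.pstate_mono_of_isPrefix φ (List.prefix_append _ _)
  refine (hmax ⟨v ++ [a], ?_, by simp⟩ hle).antisymm hle
  simpa [or_imp, forall_and] using ⟨hv, ha⟩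

theorem growthOf_stateLoopP_le_gammaC [Finite A] {W : List A} (hW : W ∈ E.Cset φ) :
    growthOf w (E.stateLoopP φ (E.pstate φ W)) ≤ E.gammaC φ := by
  refine le_csSup (((Set.finite_range (growthOf w)).subset ?_).bddAbove) ⟨W, hW, rfl⟩
  rintro _ ⟨V, -, rfl⟩
  exact ⟨_, rfl⟩

theorem eq_stateLoopP_of_subset [Finite A] {W : List A} (hW : W ∈ E.Cset φ) {L : Set A}
    (hL : L ⊆ E.stateLoopP φ (E.pstate φ W)) (hdom : growthOf w L = E.gammaC φ) :
    L = E.stateLoopP φ (E.pstate φ W) := by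
  by_contra hne
  exact (growthOf_strictMono E.weight_pos (hL.ssubset_of_ne hne)).not_ge
    (hdom ▸ E.growthOf_stateLoopP_le_gammaC φ hW)

/-! ### Dominant prefix states of a word -/

/-- The dominant prefix states on the prefix transition path of `W`, described by prefixes of `W`
instead of positions in `W`; `domCountP` counts them. -/
def domP (W : List A) : Set (Fin f → ℕ) :=
  {p | (∃ V, V <+: W ∧ E.pstate φ V = p) ∧ growthOf w (E.stateLoopP φ p) = E.gammaC φ}

theorem domCountP_eq_ncard_domP (W : List A) : E.domCountP φ W = (E.domP φ W).ncard := by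
  refine congrArg Set.ncard (Set.ext fun p => and_congr_left fun _ => ?_)
  constructor
  · rintro ⟨j, -, h⟩
    exact ⟨W.take j, List.take_prefix j W, h⟩
  · rintro ⟨V, hVW, h⟩
    exact ⟨V.length, hVW.length_le, by rwa [← List.prefix_iff_eq_take.1 hVW]⟩

theorem domP_subset_range (W : List A) : E.domP φ W ⊆ Set.range (E.pstate φ) := by
  rintro _ ⟨⟨V, -, rfl⟩, -⟩
  exact ⟨V, rfl⟩

theorem finite_domP (W : List A) : (E.domP φ W).Finite :=
  (E.finite_range_pstate φ).subset (E.domP_subset_range φ W)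

theorem ncard_domP_le_Dmax {W : List A} (hW : W ∈ E.Cset φ) :
    (E.domP φ W).ncard ≤ E.Dmax φ := by
  refine le_csSup ⟨(Set.range (E.pstate φ)).ncard, ?_⟩ ⟨W, hW, E.domCountP_eq_ncard_domP φ W⟩
  rintro _ ⟨V, -, rfl⟩
  rw [domCountP_eq_ncard_domP]
  exact Set.ncard_le_ncard (E.domP_subset_range φ V) (E.finite_range_pstate φ)

theorem domP_subset_of_isPrefix {V W : List A} (h : V <+: W) :
    E.domP φ V ⊆ {p ∈ E.domP φ W | p ≤ E.pstate φ V} := by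
  rintro _ ⟨⟨U, hU, rfl⟩, hdom⟩
  exact ⟨⟨⟨U, hU.trans h, rfl⟩, hdom⟩, E.pstate_mono_of_isPrefix φ hU⟩

/-! ### Saturation -/

theorem exists_saturated_of_append_mem {U Y : List A} (h : U ++ Y ∈ E.Cset φ) :
    ∃ V, U <+: V ∧ V ++ Y ∈ E.Cset φ ∧
      E.stateLoopS φ (E.sstate φ Y) ⊆ E.stateLoopP φ (E.pstate φ V) := by
  obtain ⟨v, hv, hloops⟩ := E.exists_subset_stateLoopP_append φ (E.stateLoopS φ (E.sstate φ Y)) U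
  refine ⟨U ++ v, List.prefix_append U v, ?_, hloops⟩
  rwa [List.append_assoc, append_mem_Cset_iff, E.sstate_append_of_forall_mem φ hv,
    ← append_mem_Cset_iff]

/-- `P j` is what has been written, after an initial word `U`, once the first `j` letters of `Y`
have been read, loop symbols being inserted at every position so that each loop symbol of the
current suffix state becomes a loop symbol of the current prefix state. Positions `j ≥ |Y|` read
nothing, since `(Y.drop j).take 1` is then empty. -/
structure IsSaturatedScan (U Y : List A) (P : ℕ → List A) : Prop where
  isPrefix_zero : U <+: P 0
  append_letter_isPrefix : ∀ j, P j ++ (Y.drop j).take 1 <+: P (j + 1)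
  append_drop_mem : ∀ j, P j ++ Y.drop j ∈ E.Cset φ
  loops_subset : ∀ j, E.stateLoopS φ (E.sstate φ (Y.drop j)) ⊆ E.stateLoopP φ (E.pstate φ (P j))

theorem exists_isSaturatedScan {U Y : List A} (h : U ++ Y ∈ E.Cset φ) :
    ∃ P, E.IsSaturatedScan φ U Y P := by
  induction Y generalizing U with
  | nil =>
    obtain ⟨V, hUV, hmem, hloops⟩ := E.exists_saturated_of_append_mem φ h
    exact ⟨fun _ => V, hUV, by simp, by simpa using hmem, by simpa using hloops⟩
  | cons c Y ih =>
    obtain ⟨V, hUV, hmem, hloops⟩ := E.exists_saturated_of_append_mem φ h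
    obtain ⟨P, hP⟩ := ih (U := V ++ [c]) (by simpa using hmem)
    refine ⟨fun j => Nat.casesOn j V P, hUV, ?_, ?_, ?_⟩ <;> rintro (_ | j)
    exacts [hP.isPrefix_zero, hP.append_letter_isPrefix j, hmem, hP.append_drop_mem j,
      hloops, hP.loops_subset j]

namespace IsSaturatedScan

variable {E φ} {U Y : List A} {P : ℕ → List A}

theorem isPrefix_of_le (hP : E.IsSaturatedScan φ U Y P) {j k : ℕ} (hjk : j ≤ k) : P j <+: P k := by
  induction hjk with
  | refl => exact List.prefix_rfl
  | step _ ih => exact ih.trans ((List.prefix_append _ _).trans (hP.append_letter_isPrefix _))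

theorem stateLoopS_eq_stateLoopP [Finite A] (hP : E.IsSaturatedScan φ U Y P) {j : ℕ}
    (hdom : growthOf w (E.stateLoopS φ (E.sstate φ (Y.drop j))) = E.gammaC φ) :
    E.stateLoopS φ (E.sstate φ (Y.drop j)) = E.stateLoopP φ (E.pstate φ (P j)) :=
  E.eq_stateLoopP_of_subset φ
    (E.mem_Cset_of_le φ (E.le_of_isInfix (List.prefix_append _ _).isInfix) (hP.append_drop_mem j))
    (hP.loops_subset j) hdom

/-- The prefix state is constant between positions `j` and `k`, so all letters of `Y` read there
are loop symbols. -/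
theorem sstate_drop_eq (hP : E.IsSaturatedScan φ U Y P) {j k : ℕ} (hjk : j ≤ k)
    (hstate : E.pstate φ (P j) = E.pstate φ (P k))
    (hloops : E.stateLoopP φ (E.pstate φ (P k)) ⊆ E.stateLoopS φ (E.sstate φ (Y.drop k))) :
    E.sstate φ (Y.drop j) = E.sstate φ (Y.drop k) := by
  induction hjk using Nat.decreasingInduction with
  | self => rfl
  | of_succ m hmk ih =>
    have hletter := E.pstate_mono_of_isPrefix φ (hP.append_letter_isPrefix m)
    have hsucc := E.pstate_mono_of_isPrefix φ (hP.isPrefix_of_le hmk)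
    have hread : E.pstate φ (P m) ≤ E.pstate φ (P m ++ (Y.drop m).take 1) :=
      E.pstate_mono_of_isPrefix φ (List.prefix_append _ _)
    specialize ih (hsucc.antisymm (hstate.ge.trans (hread.trans hletter)))
    rw [← List.tail_drop] at ih
    cases hdrop : Y.drop m with
    | nil => simpa [hdrop] using ih
    | cons a R =>
      rw [hdrop] at ih hletter hread
      have ha : a ∈ E.stateLoopP φ (E.pstate φ (P m)) :=
        (E.mem_stateLoopP_pstate φ).2 ((hletter.trans (hsucc.trans hstate.ge)).antisymm hread)
      rw [← ih]
      exact (E.mem_stateLoopS_sstate φ).1 (ih ▸ hloops (hstate ▸ ha))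

theorem domCountS_le_ncard_domP [Finite A] (hP : E.IsSaturatedScan φ U Y P) :
    E.domCountS φ Y ≤ {p ∈ E.domP φ (P Y.length) | E.pstate φ U ≤ p}.ncard := by
  set S := {s | (∃ j ≤ Y.length, E.sstate φ (Y.drop j) = s) ∧
    growthOf w (E.stateLoopS φ s) = E.gammaC φ}
  have hpos : ∀ s ∈ S, ∃ j ≤ Y.length, E.sstate φ (Y.drop j) = s := fun _ hs => hs.1
  choose! pos hpos_le hpos using hpos
  have hloops : ∀ s ∈ S, E.stateLoopS φ s = E.stateLoopP φ (E.pstate φ (P (pos s))) := by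
    intro s hs
    have hdom : growthOf w (E.stateLoopS φ (E.sstate φ (Y.drop (pos s)))) = E.gammaC φ := by
      rw [hpos s hs]; exact hs.2
    simpa only [hpos s hs] using hP.stateLoopS_eq_stateLoopP hdom
  refine Set.ncard_le_ncard_of_injOn (fun s => E.pstate φ (P (pos s))) (fun s hs => ?_) ?_
    ((E.finite_domP φ _).sep _)
  · exact ⟨⟨⟨_, hP.isPrefix_of_le (hpos_le s hs), rfl⟩, hloops s hs ▸ hs.2⟩,
      E.pstate_mono_of_isPrefix φ (hP.isPrefix_zero.trans (hP.isPrefix_of_le (Nat.zero_le _)))⟩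
  · intro s hs t ht (hst : E.pstate φ (P (pos s)) = E.pstate φ (P (pos t)))
    wlog hle : pos s ≤ pos t generalizing s t
    · exact (this ht hs hst.symm (le_of_not_ge hle)).symm
    calc s = E.sstate φ (Y.drop (pos s)) := (hpos s hs).symm
      _ = E.sstate φ (Y.drop (pos t)) := hP.sstate_drop_eq hle hst (by rw [hpos t ht, hloops t ht])
      _ = t := hpos t ht

end IsSaturatedScan

theorem domCountP_add_domCountS_le_Dmax [Finite A] {X Y : List A} {b : A}
    (hb : b ∉ E.stateLoopP φ (E.pstate φ X)) (hmem : X ++ [b] ++ Y ∈ E.Cset φ) :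
    E.domCountP φ X + E.domCountS φ Y ≤ E.Dmax φ := by
  obtain ⟨P, hP⟩ := E.exists_isSaturatedScan φ hmem
  set W := P Y.length
  have hW : W ∈ E.Cset φ := by simpa using hP.append_drop_mem Y.length
  have hXW : X <+: W :=
    (List.prefix_append X [b]).trans (hP.isPrefix_zero.trans (hP.isPrefix_of_le (Nat.zero_le _)))
  have hdisj : Disjoint {p ∈ E.domP φ W | p ≤ E.pstate φ X}
      {p ∈ E.domP φ W | E.pstate φ (X ++ [b]) ≤ p} := by
    refine Set.disjoint_left.2 fun p hpX hpb => hb ((E.mem_stateLoopP_pstate φ).2 ?_)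
    exact (hpb.2.trans hpX.2).antisymm (E.pstate_mono_of_isPrefix φ (List.prefix_append X [b]))
  have hfin := E.finite_domP φ W
  calc E.domCountP φ X + E.domCountS φ Y
      ≤ {p ∈ E.domP φ W | p ≤ E.pstate φ X}.ncard +
          {p ∈ E.domP φ W | E.pstate φ (X ++ [b]) ≤ p}.ncard := by
        rw [domCountP_eq_ncard_domP]
        exact add_le_add (Set.ncard_le_ncard (E.domP_subset_of_isPrefix φ hXW) (hfin.sep _))
          hP.domCountS_le_ncard_domP
    _ = ({p ∈ E.domP φ W | p ≤ E.pstate φ X} ∪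
          {p ∈ E.domP φ W | E.pstate φ (X ++ [b]) ≤ p}).ncard :=
        (Set.ncard_union_eq hdisj (hfin.sep _) (hfin.sep _)).symm
    _ ≤ (E.domP φ W).ncard :=
        Set.ncard_le_ncard (Set.union_subset (Set.sep_subset _ _) (Set.sep_subset _ _)) hfin
    _ ≤ E.Dmax φ := E.ncard_domP_le_Dmax φ hW

end EmbeddingOrder

theorem matches_of_tight_general {A : Type*} [Finite A] {w : A → ℕ}
    (E : EmbeddingOrder A w) {f : ℕ} (φ : Fin f → List A) (X Y : List A)
    (hcompat : ¬ POverlap φ (E.pstate φ X) (E.sstate φ Y))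
    (hd : E.Dmax φ < E.domCountP φ X + E.domCountS φ Y)
    (hL : E.stateLoopP φ (E.pstate φ X) ⊆ E.stateLoopS φ (E.sstate φ Y)) :
    E.Matches φ (E.pstate φ X) (E.sstate φ Y) := by
  have hloop {b : A} (hmem : X ++ [b] ++ Y ∈ E.Cset φ) : b ∈ E.stateLoopP φ (E.pstate φ X) := by
    by_contra hb
    exact hd.not_ge (E.domCountP_add_domCountS_le_Dmax φ hb hmem)
  refine ⟨hcompat, fun p' ⟨hne, b, hb⟩ => ?_, fun s' ⟨hne, b, hb⟩ => ?_⟩ <;> by_contra hov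
  · have hmem : X ++ [b] ++ Y ∈ E.Cset φ := by rwa [append_mem_Cset_iff, hb X rfl]
    exact hne ((hloop hmem X rfl).symm.trans (hb X rfl))
  · have hmem : X ++ [b] ++ Y ∈ E.Cset φ := by
      rwa [List.append_assoc, append_mem_Cset_iff, List.singleton_append, hb Y rfl]
    exact hne ((hL (hloop hmem) Y rfl).symm.trans (hb Y rfl))

/-- **Lemma `lem-tight`.**  Let `X` be a word with prefix state `p` and `d_X` dominant
loop blocks in its prefix decomposition, and `Y` a word with suffix state `s` and `d_Y`
dominant loop blocks in its suffix decomposition.  Suppose that `p` and `s` are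
compatible, that `d_X + d_Y = D + 1`, that `L_p = coL_s`, and that the state `p` (and
therefore also `s`) is dominant.  Then `p` and `s` match. -/
theorem matches_of_tight {A : Type*} [Fintype A] {w : A → ℕ}
    (E : EmbeddingOrder A w) {f : ℕ} (φ : Fin f → List A)
    (hw : ∀ a, 0 < w a)
    (one : A) (hone : w one = 1) (hone_le : ∀ a : A, E.le [one] [a])
    (hf : 0 < f) (hφne : ∀ i, φ i ≠ [])
    (hφmin : ∀ i ψ, E.le ψ (φ i) → ψ ≠ φ i → ψ ∈ E.Cset φ)
    (hunb : ¬ ∃ M : ℕ, ∀ n : ℕ,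
      Set.ncard {W : List A | W ∈ E.Cset φ ∧ EmbeddingOrder.wt w W = n} ≤ M)
    (X Y : List A)
    (hcompat : ¬ POverlap φ (E.pstate φ X) (E.sstate φ Y))
    (hd : E.domCountP φ X + E.domCountS φ Y = E.Dmax φ + 1)
    (hL : E.stateLoopP φ (E.pstate φ X) = E.stateLoopS φ (E.sstate φ Y))
    (hdom : growthOf w (E.stateLoopP φ (E.pstate φ X)) = E.gammaC φ) :
    E.Matches φ (E.pstate φ X) (E.sstate φ Y) := by
  exact matches_of_tight_general E φ X Y hcompat (by omega) hL.subset
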